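/- Let f : ℂⁿ → ℂ be a mixed polynomial that is convenient and Newton non-degenerate. Then S(f) = ∅. -/

import Mathlib

open Complex Filter Finset

noncomputable section

abbrev MixedCoeff (n : ℕ) := ((Fin n → ℕ) × (Fin n → ℕ)) →₀ ℂ

namespace Mixed

variable {n : ℕ}

/-- Evaluation of a mixed polynomial given by its coefficient function `c`:
`f(z) = Σ c(ν,μ) zᵛ z̄ᵘ`. -/
def eval (c : MixedCoeff n) (z : Fin n → ℂ) : ℂ :=
  c.sum fun p a => a * (∏ i, z i ^ p.1 i) * ∏ i, (starRingEnd ℂ) (z i) ^ p.2 i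

/-- `∂f/∂z_i` evaluated at `(z, z̄)`. -/
def dz (c : MixedCoeff n) (i : Fin n) (z : Fin n → ℂ) : ℂ :=
  c.sum fun p a => a * (p.1 i) * (∏ j, z j ^ (p.1 j - if j = i then 1 else 0)) *
    ∏ j, (starRingEnd ℂ) (z j) ^ p.2 j

/-- `∂f/∂z̄_i` evaluated at `(z, z̄)`. -/
def dzbar (c : MixedCoeff n) (i : Fin n) (z : Fin n → ℂ) : ℂ :=
  c.sum fun p a => a * (p.2 i) * (∏ j, z j ^ p.1 j) *
    ∏ j, (starRingEnd ℂ) (z j) ^ (p.2 j - if j = i then 1 else 0)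

/-- The singular locus of `f` as a real map `ℝ²ⁿ → ℝ²`. -/
def Sing (c : MixedCoeff n) : Set (Fin n → ℂ) :=
  {z | ¬ Function.Surjective ⇑(fderiv ℝ (eval c) z)}

/-- The Milnor set `M(f)`. -/
def Milnor (c : MixedCoeff n) : Set (Fin n → ℂ) :=
  {z | ∃ (l : ℝ) (m : ℂ), m ≠ 0 ∧
    ∀ i, (l : ℂ) * z i = m * (starRingEnd ℂ) (dz c i z) + (starRingEnd ℂ) m * dzbar c i z}

/-- The set `S(f)` of asymptotic ρ-nonregular values. -/
def Sset (c : MixedCoeff n) : Set ℂ :=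
  {v | ∃ zk : ℕ → (Fin n → ℂ), (∀ k, zk k ∈ Milnor c) ∧
    Tendsto (fun k => ‖zk k‖) atTop atTop ∧
    Tendsto (fun k => eval c (zk k)) atTop (nhds v)}

/-- The point of `ℝⁿ` attached to the exponent pair `(ν,μ)`, namely `ν+μ`. -/
def suppPt (p : (Fin n → ℕ) × (Fin n → ℕ)) : Fin n → ℝ := fun i => ((p.1 i + p.2 i : ℕ) : ℝ)

/-- The support of `f`, as a subset of `ℝⁿ`. -/
def suppPts (c : MixedCoeff n) : Set (Fin n → ℝ) := suppPt '' (c.support : Set _)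

/-- The Newton polyhedron `Γ₀(f)`: convex hull of `{0} ∪ supp(f)`. -/
def Gamma0 (c : MixedCoeff n) : Set (Fin n → ℝ) := convexHull ℝ (insert 0 (suppPts c))

/-- `supp(f)‾`: the convex hull of `supp(f) \ {0}`. -/
def suppBar (c : MixedCoeff n) : Set (Fin n → ℝ) := convexHull ℝ (suppPts c \ {0})

/-- `F` is a face of the (compact convex) set `C`: either `C` itself or the set of
minimizers on `C` of a linear functional, and nonempty. -/
def IsFaceOf (C F : Set (Fin n → ℝ)) : Prop :=
  F.Nonempty ∧ (F = C ∨ ∃ a : Fin n → ℝ,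
    F = {x ∈ C | ∀ y ∈ C, ∑ i, a i * x i ≤ ∑ i, a i * y i})

/-- `Δ` is a face of the Newton boundary at infinity `Γ⁺(f)`: a face of `Γ₀(f)` not
containing the origin. -/
def IsGammaPlusFace (c : MixedCoeff n) (Δ : Set (Fin n → ℝ)) : Prop :=
  IsFaceOf (Gamma0 c) Δ ∧ (0 : Fin n → ℝ) ∉ Δ

/-- `Γ⁺(f)` as a subset of `ℝⁿ`: the union of the faces of `Γ₀(f)` not containing `0`. -/
def GammaPlusSet (c : MixedCoeff n) : Set (Fin n → ℝ) :=
  {x | ∃ Δ, IsGammaPlusFace c Δ ∧ x ∈ Δ}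

/-- The truncation `f_Δ` of `f` to a subset `Δ ⊆ ℝⁿ`. -/
def trunc (c : MixedCoeff n) (Δ : Set (Fin n → ℝ)) : MixedCoeff n :=
  @Finsupp.filter _ _ _ (fun p => suppPt p ∈ Δ) (Classical.decPred _) c

/-- Newton non-degeneracy: for every face `Δ` of `Γ⁺(f)`,
`Sing f_Δ ∩ f_Δ⁻¹(0) ∩ (ℂ*)ⁿ = ∅`. -/
def NewtonNonDeg (c : MixedCoeff n) : Prop :=
  ∀ Δ, IsGammaPlusFace c Δ → ∀ z : Fin n → ℂ, (∀ i, z i ≠ 0) →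
    eval (trunc c Δ) z = 0 → z ∉ Sing (trunc c Δ)

/-- Newton strong non-degeneracy: for every face `Δ` of `Γ⁺(f)`,
`Sing f_Δ ∩ (ℂ*)ⁿ = ∅`. -/
def NewtonStronglyNonDeg (c : MixedCoeff n) : Prop :=
  ∀ Δ, IsGammaPlusFace c Δ → ∀ z : Fin n → ℂ, (∀ i, z i ≠ 0) →
    z ∉ Sing (trunc c Δ)

/-- `Δ` is a bad face of `supp(f)‾`. -/
def IsBadFace (c : MixedCoeff n) (Δ : Set (Fin n → ℝ)) : Prop :=
  IsFaceOf (suppBar c) Δ ∧ (0 : Fin n → ℝ) ∈ affineSpan ℝ Δ ∧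
    ∃ a : Fin n → ℝ, (∃ i, a i < 0) ∧ (∃ j, 0 < a j) ∧
      {x ∈ suppBar c | ∑ i, a i * x i = 0} = Δ

/-- `f` depends effectively on all its variables. -/
def EffectiveAll (c : MixedCoeff n) : Prop :=
  ∀ i, ∃ p ∈ c.support, 0 < p.1 i + p.2 i

/-- The Euclidean norm on `ℂⁿ`. -/
def norm2 (v : Fin n → ℂ) : ℝ := Real.sqrt (∑ i, Complex.normSq (v i))

end Mixed

/-- `f` is convenient: its support meets every coordinate axis. -/
def Convenient {n : ℕ} (c : MixedCoeff n) : Prop :=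
  ∀ i : Fin n, ∃ k : ℕ, 1 ≤ k ∧ ∃ p ∈ c.support,
    (fun j => p.1 j + p.2 j) = fun j => if j = i then k else 0

namespace Mixed

/-- The mixed monomial. -/
def mono {n : ℕ} (p : (Fin n → ℕ) × (Fin n → ℕ)) (z : Fin n → ℂ) : ℂ :=
  (∏ i, z i ^ p.1 i) * ∏ i, (starRingEnd ℂ) (z i) ^ p.2 i

lemma eval_eq {n : ℕ} (c : MixedCoeff n) (z : Fin n → ℂ) :
    eval c z = ∑ p ∈ c.support, c p * mono p z := by
  simp [eval, mono, Finsupp.sum, mul_assoc]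

lemma mono_cont {n : ℕ} (p : (Fin n → ℕ) × (Fin n → ℕ)) : Continuous (mono p) := by
  unfold mono
  fun_prop

lemma prod_pred {n : ℕ} (x : Fin n → ℂ) (e : Fin n → ℕ) (i : Fin n) :
    x i * ((e i : ℂ) * ∏ j, x j ^ (e j - if j = i then 1 else 0)) = e i * ∏ j, x j ^ e j := by
  rcases Nat.eq_zero_or_pos (e i) with h | h
  · simp [h]
  · rw [← Finset.mul_prod_erase univ (fun j => x j ^ (e j - if j = i then 1 else 0)) (mem_univ i),
      ← Finset.mul_prod_erase univ (fun j => x j ^ e j) (mem_univ i)]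
    have h1 : ∏ j ∈ univ.erase i, x j ^ (e j - if j = i then 1 else 0)
        = ∏ j ∈ univ.erase i, x j ^ e j := by
      refine Finset.prod_congr rfl fun j hj => ?_
      simp [(Finset.mem_erase.mp hj).1]
    rw [h1]
    obtain ⟨k, hk⟩ : ∃ k, e i = k + 1 := ⟨e i - 1, by omega⟩
    simp only [hk, if_true, Nat.add_sub_cancel]
    ring

lemma z_mul_dz {n : ℕ} (c : MixedCoeff n) (i : Fin n) (z : Fin n → ℂ) :
    z i * dz c i z = ∑ p ∈ c.support, c p * (p.1 i) * mono p z := by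
  simp only [dz, Finsupp.sum, Finset.mul_sum]
  refine Finset.sum_congr rfl fun p _ => ?_
  have := prod_pred z p.1 i
  unfold mono
  linear_combination (c p * ∏ j, (starRingEnd ℂ) (z j) ^ p.2 j) * this

lemma zbar_mul_dzbar {n : ℕ} (c : MixedCoeff n) (i : Fin n) (z : Fin n → ℂ) :
    (starRingEnd ℂ) (z i) * dzbar c i z = ∑ p ∈ c.support, c p * (p.2 i) * mono p z := by
  simp only [dzbar, Finsupp.sum, Finset.mul_sum]
  refine Finset.sum_congr rfl fun p _ => ?_
  have := prod_pred (fun j => (starRingEnd ℂ) (z j)) p.2 i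
  unfold mono
  linear_combination (c p * ∏ j, z j ^ p.1 j) * this

lemma gsum_cont {n : ℕ} (S : Finset ((Fin n → ℕ) × (Fin n → ℕ)))
    (b : (Fin n → ℕ) × (Fin n → ℕ) → ℂ) : Continuous fun z => ∑ p ∈ S, b p * mono p z :=
  continuous_finsetSum _ fun p _ => continuous_const.mul (mono_cont p)

lemma perturb {n : ℕ} (c : MixedCoeff n) (z : Fin n → ℂ) (hz : z ∈ Milnor c) :
    ∃ (z' : Fin n → ℂ) (l : ℝ) (m : ℂ), ‖m‖ = 1 ∧ (∀ i, z' i ≠ 0) ∧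
      ‖eval c z'‖ ≤ ‖eval c z‖ + 1 ∧ ‖z‖ - 1 ≤ ‖z'‖ ∧
      ∀ i, ‖((l * ‖z' i‖ ^ 2 : ℝ) : ℂ) -
        (m * (starRingEnd ℂ) (∑ p ∈ c.support, c p * (p.1 i) * mono p z') +
        (starRingEnd ℂ) m * ∑ p ∈ c.support, c p * (p.2 i) * mono p z')‖ ≤ 1 := by
  obtain ⟨l, m, hm, h⟩ := hz
  have hm' : ‖m‖ ≠ 0 := by simpa using hm
  set m' : ℂ := m / ‖m‖ with hm'def
  have hnm : ‖m'‖ = 1 := by simp [m', hm']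
  let g : Fin n → (Fin n → ℂ) → ℂ := fun i z' => (((l / ‖m‖) * ‖z' i‖ ^ 2 : ℝ) : ℂ) -
        (m' * (starRingEnd ℂ) (∑ p ∈ c.support, c p * (p.1 i) * mono p z') +
        (starRingEnd ℂ) m' * ∑ p ∈ c.support, c p * (p.2 i) * mono p z')
  have hg0 : ∀ i, g i z = 0 := by
    intro i
    have h2 : ((‖z i‖ ^ 2 : ℝ) : ℂ) = z i * (starRingEnd ℂ) (z i) := by
      rw [Complex.mul_conj, Complex.normSq_eq_norm_sq]
    simp only [g]
    rw [← z_mul_dz, ← zbar_mul_dzbar, Complex.ofReal_mul, h2]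
    have h3 := h i
    have hmc : ((‖m‖ : ℝ) : ℂ) ≠ 0 := by exact_mod_cast hm'
    simp only [m', map_mul, map_div₀, Complex.conj_ofReal, Complex.ofReal_div]
    field_simp
    linear_combination (starRingEnd ℂ) (z i) * h3
  have hgc : ∀ i, Continuous (g i) := by
    intro i
    have h1 := gsum_cont c.support (fun p => c p * (p.1 i))
    have h2 := gsum_cont c.support (fun p => c p * (p.2 i))
    simp only [g]
    fun_prop
  have hec : Continuous (eval c) := by
    have h1 := gsum_cont c.support c
    exact h1.congr fun z => (eval_eq c z).symm
  have hd : Dense {z : Fin n → ℂ | ∀ i, z i ≠ 0} := by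
    have := dense_pi (α := fun _ : Fin n => ℂ) Set.univ (s := fun _ => ({0}ᶜ : Set ℂ))
      (fun i _ => dense_compl_singleton (0 : ℂ))
    convert this using 1
    ext z; simp
  have ev : ∀ᶠ z' in nhds z, ‖eval c z'‖ < ‖eval c z‖ + 1 ∧ ‖z‖ - 1 < ‖z'‖ ∧
      ∀ i, ‖g i z'‖ < 1 := by
    refine ((hec.norm.tendsto z).eventually_lt_const (by linarith)).and
      (((continuous_norm.tendsto z).eventually_const_lt (by linarith)).and
      (Filter.eventually_all.2 fun i => ?_))
    refine ((hgc i).norm.tendsto z).eventually_lt_const ?_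
    rw [hg0]; simp
  obtain ⟨z', hz', h0⟩ := mem_closure_iff_nhds.1 (hd z) _ ev
  exact ⟨z', l / ‖m‖, m', hnm, h0, hz'.1.le, hz'.2.1.le, fun i => (hz'.2.2 i).le⟩

lemma mono_scale {n : ℕ} (p : (Fin n → ℕ) × (Fin n → ℕ)) (w : Fin n → ℝ) (a : Fin n → ℂ) :
    mono p (fun i => ((Real.exp (w i) : ℝ) : ℂ) * a i)
      = ((Real.exp (w ⬝ᵥ suppPt p) : ℝ) : ℂ) * mono p a := by
  simp only [mono, map_mul, Complex.conj_ofReal, mul_pow, Finset.prod_mul_distrib]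
  have : ((Real.exp (w ⬝ᵥ suppPt p) : ℝ) : ℂ) =
      (∏ i, ((Real.exp (w i) : ℝ) : ℂ) ^ p.1 i) * ∏ i, ((Real.exp (w i) : ℝ) : ℂ) ^ p.2 i := by
    rw [← Finset.prod_mul_distrib, dotProduct, Real.exp_sum, Complex.ofReal_prod]
    refine Finset.prod_congr rfl fun i _ => ?_
    rw [← pow_add, suppPt, mul_comm, Real.exp_nat_mul, Complex.ofReal_pow]
  rw [this]
  ring

lemma mono_curve {n : ℕ} (p : (Fin n → ℕ) × (Fin n → ℕ)) (a t : Fin n → ℂ) (s : ℝ) :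
    mono p (fun i => a i * Complex.exp (s * t i)) = mono p a *
      Complex.exp (s * ∑ i, ((p.1 i) * t i + (p.2 i) * (starRingEnd ℂ) (t i))) := by
  have h : Complex.exp (s * ∑ i, ((p.1 i) * t i + (p.2 i) * (starRingEnd ℂ) (t i))) =
      (∏ i, Complex.exp (s * t i) ^ p.1 i) *
        ∏ i, Complex.exp (s * (starRingEnd ℂ) (t i)) ^ p.2 i := by
    rw [← Finset.prod_mul_distrib, Finset.mul_sum, Complex.exp_sum]
    refine Finset.prod_congr rfl fun i _ => ?_
    rw [← Complex.exp_nat_mul, ← Complex.exp_nat_mul, ← Complex.exp_add]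
    congr 1; ring
  rw [h]
  simp only [mono, map_mul, ← Complex.exp_conj, Complex.conj_ofReal, mul_pow,
    Finset.prod_mul_distrib]
  ring

lemma eval_diff {n : ℕ} (c : MixedCoeff n) : Differentiable ℝ (eval c) := by
  have : eval c = fun z => ∑ p ∈ c.support, c p * mono p z := funext (eval_eq c)
  rw [this]
  have hconj : Differentiable ℝ (fun z : ℂ => (starRingEnd ℂ) z) :=
    Complex.conjCLE.differentiable
  have h2 : ∀ i : Fin n, Differentiable ℝ (fun z : Fin n → ℂ => (starRingEnd ℂ) (z i)) :=
    fun i => hconj.comp (differentiable_apply i)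
  unfold mono
  refine Differentiable.fun_sum fun p _ => ?_
  have key : ∀ (g : Fin n → (Fin n → ℂ) → ℂ) (e : Fin n → ℕ), (∀ i, Differentiable ℝ (g i)) →
      Differentiable ℝ (fun z => ∏ i, g i z ^ e i) := fun g e hg z =>
    (HasFDerivAt.finsetProd (u := univ) (g := fun i z => g i z ^ e i)
      fun i _ => ((hg i z).pow (e i)).hasFDerivAt).differentiableAt
  exact (differentiable_const _).mul
    (Differentiable.mul (key (fun i z => z i) _ (differentiable_apply)) (key _ _ h2))

lemma fderiv_eval {n : ℕ} (c : MixedCoeff n) (a t : Fin n → ℂ) :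
    fderiv ℝ (eval c) a (fun i => a i * t i) = ∑ p ∈ c.support, c p * (mono p a *
      ∑ i, ((p.1 i) * t i + (p.2 i) * (starRingEnd ℂ) (t i))) := by
  have hexp : ∀ w : ℂ, HasDerivAt (fun s : ℝ => Complex.exp (s * w)) w 0 := by
    intro w
    have h1 : HasDerivAt (fun s : ℝ => (s : ℂ) * w) w 0 := by
      simpa using (Complex.ofRealCLM.hasDerivAt (x := (0 : ℝ))).mul_const w
    simpa using h1.cexp
  have hcurve : HasDerivAt (fun s : ℝ => fun i => a i * Complex.exp (s * t i))
      (fun i => a i * t i) 0 :=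
    hasDerivAt_pi.2 fun i => (hexp (t i)).const_mul (a i)
  have h0 : (fun i => a i * Complex.exp (((0 : ℝ) : ℂ) * t i)) = a := by simp
  have hf : HasFDerivAt (eval c) (fderiv ℝ (eval c) a)
      ((fun s : ℝ => fun i => a i * Complex.exp (s * t i)) 0) := by
    simp only [h0]
    exact (eval_diff c a).hasFDerivAt
  have h1 := hf.comp_hasDerivAt 0 hcurve
  have h2 : HasDerivAt (eval c ∘ fun s : ℝ => fun i => a i * Complex.exp (s * t i))
      (∑ p ∈ c.support, c p * (mono p a *
      ∑ i, ((p.1 i) * t i + (p.2 i) * (starRingEnd ℂ) (t i)))) 0 := by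
    have : (eval c ∘ fun s : ℝ => fun i => a i * Complex.exp (s * t i)) =
        fun s : ℝ => ∑ p ∈ c.support, c p * (mono p a *
      Complex.exp (s * ∑ i, ((p.1 i) * t i + (p.2 i) * (starRingEnd ℂ) (t i)))) := by
      funext s
      simp only [Function.comp, eval_eq, mono_curve]
    rw [this]
    exact HasDerivAt.fun_sum fun p _ => ((hexp _).const_mul _).const_mul _
  exact h1.unique h2

/-- Faces from weights. -/
lemma face_of_weight {n : ℕ} (c : MixedCoeff n) (w : Fin n → ℝ)
    (p0 : (Fin n → ℕ) × (Fin n → ℕ)) (hp0 : p0 ∈ c.support)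
    (hle : ∀ p ∈ c.support, w ⬝ᵥ suppPt p ≤ w ⬝ᵥ suppPt p0) (hpos : 0 < w ⬝ᵥ suppPt p0) :
    ∃ Δ, IsGammaPlusFace c Δ ∧
      ∀ p ∈ c.support, (suppPt p ∈ Δ ↔ w ⬝ᵥ suppPt p = w ⬝ᵥ suppPt p0) := by
  have hneg : ∀ x : Fin n → ℝ, ∑ i, (-w) i * x i = - (w ⬝ᵥ x) := by
    intro x; simp [dotProduct]
  have hhull : ∀ y ∈ Gamma0 c, w ⬝ᵥ y ≤ w ⬝ᵥ suppPt p0 := by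
    intro y hy
    have hconv : Convex ℝ {y : Fin n → ℝ | w ⬝ᵥ y ≤ w ⬝ᵥ suppPt p0} :=
      convex_halfSpace_le (f := fun y => w ⬝ᵥ y)
        ⟨fun x y => dotProduct_add _ _ _, fun r x => dotProduct_smul _ _ _⟩ _
    refine convexHull_min ?_ hconv hy
    rintro x (rfl | ⟨p, hp, rfl⟩)
    · simpa using hpos.le
    · exact hle p hp
  have hmem : ∀ p ∈ c.support, suppPt p ∈ Gamma0 c := fun p hp =>
    subset_convexHull ℝ _ (Or.inr ⟨p, hp, rfl⟩)
  refine ⟨{x ∈ Gamma0 c | ∀ y ∈ Gamma0 c, ∑ i, (-w) i * x i ≤ ∑ i, (-w) i * y i},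
    ⟨⟨⟨suppPt p0, hmem p0 hp0, ?_⟩, Or.inr ⟨-w, rfl⟩⟩, ?_⟩, ?_⟩
  · intro y hy
    rw [hneg, hneg]
    linarith [hhull y hy]
  · rintro ⟨_, h⟩
    have := h _ (hmem p0 hp0)
    rw [hneg, hneg] at this
    simp at this
    linarith
  · intro p hp
    constructor
    · rintro ⟨_, h⟩
      have := h _ (hmem p0 hp0)
      rw [hneg, hneg] at this
      linarith [hle p hp]
    · intro h
      refine ⟨hmem p hp, fun y hy => ?_⟩
      rw [hneg, hneg]
      linarith [hhull y hy]

end Mixed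

namespace Mixed

lemma exists_pinv {V W : Type*} [AddCommGroup V] [Module ℝ V] [AddCommGroup W] [Module ℝ W]
    (T : V →ₗ[ℝ] W) : ∃ S : W →ₗ[ℝ] V, ∀ x, T (S (T x)) = T x := by
  obtain ⟨g, hg⟩ := T.rangeRestrict.exists_rightInverse_of_surjective T.range_rangeRestrict
  obtain ⟨S, hS⟩ := LinearMap.exists_extend g
  refine ⟨S, fun x => ?_⟩
  have h1 : S (T x) = g (T.rangeRestrict x) := by
    rw [← hS]; rfl
  have h2 := LinearMap.congr_fun hg (T.rangeRestrict x)
  rw [h1]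
  exact congrArg Subtype.val h2

lemma ultra_lim {X : Type*} [SeminormedAddCommGroup X] [ProperSpace X]
    (U : Ultrafilter ℕ) (x : ℕ → X) (B : ℝ)
    (h : ∀ᶠ k in (U : Filter ℕ), ‖x k‖ ≤ B) : ∃ y, Tendsto x U (nhds y) := by
  obtain ⟨y, _, hy⟩ := (isCompact_closedBall (0 : X) B).ultrafilter_le_nhds (U.map x) (by
    rw [le_principal_iff]
    change {k | x k ∈ Metric.closedBall 0 B} ∈ (U : Filter ℕ)
    filter_upwards [h] with k hk
    simpa using hk)
  exact ⟨y, hy⟩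

lemma main_aux {n : ℕ} (c : MixedCoeff n) (hconv : Convenient c) (hnd : NewtonNonDeg c)
    (U : Ultrafilter ℕ) (z : ℕ → Fin n → ℂ) (l : ℕ → ℝ) (m : ℕ → ℂ)
    (hm : ∀ k, ‖m k‖ = 1) (hz : ∀ k i, z k i ≠ 0)
    (B : ℝ) (hev : ∀ᶠ k in (U : Filter ℕ), ‖eval c (z k)‖ ≤ B)
    (hinf : Tendsto (fun k => ‖z k‖) U atTop)
    (hmil : ∀ k i, ‖((l k * ‖z k i‖ ^ 2 : ℝ) : ℂ) -
        (m k * (starRingEnd ℂ) (∑ p ∈ c.support, c p * (p.1 i) * mono p (z k)) +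
        (starRingEnd ℂ) (m k) * ∑ p ∈ c.support, c p * (p.2 i) * mono p (z k))‖ ≤ 1) :
    False := by
  classical
  -- logarithms
  set L : ℕ → Fin n → ℝ := fun k i => Real.log ‖z k i‖ with hL
  have hzpos : ∀ k i, 0 < ‖z k i‖ := fun k i => norm_pos_iff.2 (hz k i)
  -- every large point has a large monomial
  have hbig : ∀ᶠ k in (U : Filter ℕ), ∃ p ∈ c.support, Real.log ‖z k‖ ≤ L k ⬝ᵥ suppPt p := by
    filter_upwards [hinf.eventually_ge_atTop 1] with k hk
    have hne : Nonempty (Fin n) := by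
      by_contra hcon
      rw [not_nonempty_iff] at hcon
      have : ‖z k‖ = 0 := by simp [Pi.norm_def]
      linarith
    obtain ⟨i, hi⟩ := Finite.exists_max (fun i => ‖z k i‖)
    have hni : ‖z k‖ = ‖z k i‖ :=
      le_antisymm ((pi_norm_le_iff_of_nonneg (norm_nonneg _)).2 hi) (norm_le_pi_norm _ i)
    obtain ⟨e, he, p, hp, hpe⟩ := hconv i
    refine ⟨p, hp, ?_⟩
    have h1 : L k ⬝ᵥ suppPt p = L k i * e := by
      have : suppPt p = fun j => if j = i then (e : ℝ) else 0 := by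
        funext j
        have := congrFun hpe j
        simp only [suppPt, this]
        split_ifs <;> simp
      rw [this]
      simp [dotProduct]
    rw [h1, hni]
    have h2 : 0 ≤ L k i := Real.log_nonneg (by rw [← hni]; exact hk)
    have h3 : (1 : ℝ) ≤ e := by exact_mod_cast he
    change L k i ≤ _
    nlinarith
  -- the dominant exponent
  obtain ⟨p0, hp0, hmax⟩ : ∃ p0 ∈ c.support, ∀ᶠ k in (U : Filter ℕ),
      ∀ p ∈ c.support, L k ⬝ᵥ suppPt p ≤ L k ⬝ᵥ suppPt p0 := by
    have : ∀ᶠ k in (U : Filter ℕ), ∃ p0 ∈ (c.support : Set _),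
        ∀ p ∈ c.support, L k ⬝ᵥ suppPt p ≤ L k ⬝ᵥ suppPt p0 := by
      filter_upwards [hbig] with k hk
      obtain ⟨p, hp, _⟩ := hk
      exact Finset.exists_max_image c.support (fun p => L k ⬝ᵥ suppPt p) ⟨p, hp⟩
    exact (Ultrafilter.eventually_exists_mem_iff c.support.finite_toSet).1 this
  have htop : Tendsto (fun k => L k ⬝ᵥ suppPt p0) U atTop := by
    refine tendsto_atTop_mono' _ ?_ (Real.tendsto_log_atTop.comp hinf)
    filter_upwards [hbig, hmax] with k hk hk2
    obtain ⟨p, hp, h⟩ := hk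
    exact h.trans (hk2 p hp)
  -- the exponents comparable with the dominant one
  let D : Finset ((Fin n → ℕ) × (Fin n → ℕ)) := c.support.filter fun p =>
    ∃ C : ℝ, ∀ᶠ k in (U : Filter ℕ), L k ⬝ᵥ suppPt p0 - L k ⬝ᵥ suppPt p ≤ C
  have hD0 : ∀ p ∈ c.support, p ∉ D →
      Tendsto (fun k => L k ⬝ᵥ suppPt p0 - L k ⬝ᵥ suppPt p) U atTop := by
    intro p hp hpD
    have h1 : ¬ ∃ C : ℝ, ∀ᶠ k in (U : Filter ℕ), L k ⬝ᵥ suppPt p0 - L k ⬝ᵥ suppPt p ≤ C :=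
      fun h => hpD (Finset.mem_filter.2 ⟨hp, h⟩)
    push Not at h1
    rw [tendsto_atTop]
    intro C
    have h2 := h1 C
    filter_upwards [h2] with k hk using hk.le
  let T : (Fin n → ℝ) →ₗ[ℝ] ({p // p ∈ D} → ℝ) :=
    { toFun := fun w p => w ⬝ᵥ (suppPt p0 - suppPt p.1)
      map_add' := by intro x y; funext p; exact add_dotProduct _ _ _
      map_smul' := by intro r x; funext p; exact smul_dotProduct _ _ _ }
  obtain ⟨S, hS⟩ := exists_pinv T
  have hTlim : ∃ τ, Tendsto (fun k => T (L k)) U (nhds τ) := by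
    have : ∀ p : {p // p ∈ D}, ∃ t, Tendsto (fun k => T (L k) p) U (nhds t) := by
      rintro ⟨p, hp⟩
      obtain ⟨hps, C, hC⟩ := Finset.mem_filter.1 hp
      refine ultra_lim U _ C ?_
      filter_upwards [hC, hmax] with k hk hk2
      have h3 := hk2 p hps
      change ‖L k ⬝ᵥ (suppPt p0 - suppPt p)‖ ≤ C
      rw [dotProduct_sub, Real.norm_eq_abs, abs_of_nonneg (by linarith)]
      exact hk
    choose t ht using this
    exact ⟨t, tendsto_pi_nhds.2 ht⟩
  obtain ⟨τ, hτ⟩ := hTlim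
  set u : ℕ → Fin n → ℝ := fun k => S (T (L k)) with hu
  have hulim : Tendsto u U (nhds (S τ)) :=
    ((S.continuous_of_finiteDimensional.tendsto τ).comp hτ)
  set w : ℕ → Fin n → ℝ := fun k => L k - u k with hw
  have hwD : ∀ k, ∀ p ∈ D, w k ⬝ᵥ suppPt p = w k ⬝ᵥ suppPt p0 := by
    intro k p hp
    have h1 : T (w k) = 0 := by
      simp only [hw, hu, map_sub, hS, sub_self]
    have h2 : w k ⬝ᵥ (suppPt p0 - suppPt p) = 0 := congrFun h1 ⟨p, hp⟩
    rw [dotProduct_sub] at h2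
    linarith
  have hudot : ∀ x : Fin n → ℝ, Tendsto (fun k => - (u k ⬝ᵥ x)) U (nhds (-(S τ ⬝ᵥ x))) := by
    intro x
    have hc : Continuous fun v : Fin n → ℝ => -(v ⬝ᵥ x) := by
      unfold dotProduct; fun_prop
    exact (hc.tendsto _).comp hulim
  have hwtop : Tendsto (fun k => w k ⬝ᵥ suppPt p0) U atTop := by
    refine (htop.atTop_add (hudot (suppPt p0))).congr fun k => ?_
    simp only [hw, sub_dotProduct]; ring
  have hwnD : ∀ p ∈ c.support, p ∉ D →
      Tendsto (fun k => w k ⬝ᵥ suppPt p0 - w k ⬝ᵥ suppPt p) U atTop := by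
    intro p hp hpD
    refine ((hD0 p hp hpD).atTop_add (hudot (suppPt p0 - suppPt p))).congr fun k => ?_
    simp only [hw, sub_dotProduct, dotProduct_sub]; ring
  -- the face
  have hface : ∃ Δ, IsGammaPlusFace c Δ ∧ ∀ p ∈ c.support, (suppPt p ∈ Δ ↔ p ∈ D) := by
    have e1 : ∀ᶠ k in (U : Filter ℕ), ∀ p ∈ c.support, p ∉ D →
        0 < w k ⬝ᵥ suppPt p0 - w k ⬝ᵥ suppPt p := by
      rw [Filter.eventually_all_finset]
      intro p hp
      by_cases h : p ∈ D
      · simp [h]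
      · filter_upwards [(hwnD p hp h).eventually_gt_atTop 0] with k hk _ using hk
    obtain ⟨k, hk1, hk2⟩ := (e1.and (hwtop.eventually_gt_atTop 0)).exists
    obtain ⟨Δ, hΔ, hΔ2⟩ := face_of_weight c (w k) p0 hp0 (by
      intro p hp
      by_cases h : p ∈ D
      · exact (hwD k p h).le
      · linarith [hk1 p hp h]) hk2
    refine ⟨Δ, hΔ, fun p hp => (hΔ2 p hp).trans ⟨fun h => ?_, hwD k p⟩⟩
    by_contra hcon
    linarith [hk1 p hp hcon]
  obtain ⟨Δ, hΔ, hΔD⟩ := hface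
  have hsupp : (trunc c Δ).support = D := by
    ext p
    simp only [trunc, Finsupp.support_filter, Finset.mem_filter]
    constructor
    · rintro ⟨h1, h2⟩; exact (hΔD p h1).1 h2
    · intro h
      have h1 : p ∈ c.support := (Finset.mem_filter.1 h).1
      exact ⟨h1, (hΔD p h1).2 h⟩
  have hval : ∀ p ∈ D, trunc c Δ p = c p := by
    intro p h
    have h1 : p ∈ c.support := (Finset.mem_filter.1 h).1
    exact Finsupp.filter_apply_pos _ _ ((hΔD p h1).2 h)
  -- rescaled points
  let a : ℕ → Fin n → ℂ := fun k i => ((Real.exp (-(w k i)) : ℝ) : ℂ) * z k i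
  have hza : ∀ k, z k = fun i => ((Real.exp (w k i) : ℝ) : ℂ) * a k i := by
    intro k; funext i
    simp only [a]
    rw [← mul_assoc, ← Complex.ofReal_mul, ← Real.exp_add]
    simp
  have hna : ∀ k i, ‖a k i‖ = Real.exp (u k i) := by
    intro k i
    simp only [a]
    rw [norm_mul, Complex.norm_real, Real.norm_eq_abs, abs_of_pos (Real.exp_pos _)]
    have : u k i = -(w k i) + Real.log ‖z k i‖ := by
      simp [hw, hL]
    rw [this, Real.exp_add, Real.exp_log (hzpos k i)]
  have hui : ∀ i, Tendsto (fun k => u k i) U (nhds (S τ i)) := tendsto_pi_nhds.1 hulim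
  have hea : ∀ i, Tendsto (fun k => ‖a k i‖) U (nhds (Real.exp (S τ i))) := by
    intro i
    simp only [hna]
    exact (Real.continuous_exp.tendsto _).comp (hui i)
  have halim : ∀ i, ∃ y, Tendsto (fun k => a k i) U (nhds y) := by
    intro i
    refine ultra_lim U _ (Real.exp (S τ i) + 1) ?_
    filter_upwards [(hea i).eventually_lt_const (show _ < Real.exp (S τ i) + 1 by linarith)]
      with k hk using hk.le
  choose a0 ha0 using halim
  have ha0ne : ∀ i, a0 i ≠ 0 := by
    intro i
    have h1 := tendsto_nhds_unique (ha0 i).norm (hea i)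
    rw [← norm_pos_iff, h1]
    exact Real.exp_pos _
  have ha : Tendsto a U (nhds a0) := tendsto_pi_nhds.2 ha0
  -- the scale
  let M : ℕ → ℝ := fun k => Real.exp (w k ⬝ᵥ suppPt p0)
  have hMpos : ∀ k, 0 < M k := fun k => Real.exp_pos _
  have hMtop : Tendsto M U atTop := Real.tendsto_exp_atTop.comp hwtop
  have hlead : ∀ b : (Fin n → ℕ) × (Fin n → ℕ) → ℂ,
      Tendsto (fun k => (∑ p ∈ c.support, b p * mono p (z k)) / (M k : ℂ)) U
        (nhds (∑ p ∈ D, b p * mono p a0)) := by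
    intro b
    have h1 : ∑ p ∈ D, b p * mono p a0 =
        ∑ p ∈ c.support, if p ∈ D then b p * mono p a0 else 0 := by
      rw [← Finset.sum_filter]
      congr 1
      ext p
      simp only [Finset.mem_filter]
      exact ⟨fun h => ⟨(Finset.mem_filter.1 h).1, h⟩, fun h => h.2⟩
    rw [h1]
    have h2 : ∀ k, (∑ p ∈ c.support, b p * mono p (z k)) / (M k : ℂ) =
        ∑ p ∈ c.support, b p * (((Real.exp (w k ⬝ᵥ suppPt p - w k ⬝ᵥ suppPt p0) : ℝ) : ℂ)
          * mono p (a k)) := by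
      intro k
      rw [Finset.sum_div]
      refine Finset.sum_congr rfl fun p _ => ?_
      conv_lhs => rw [hza k]
      rw [mono_scale, Real.exp_sub, Complex.ofReal_div]
      have : (M k : ℂ) ≠ 0 := by exact_mod_cast (hMpos k).ne'
      change _ = b p * (_ / (M k : ℂ) * _)
      field_simp
    simp only [h2]
    refine tendsto_finsetSum _ fun p hp => ?_
    have h3 : Tendsto (fun k => mono p (a k)) U (nhds (mono p a0)) :=
      ((mono_cont p).tendsto a0).comp ha
    split_ifs with h
    · simp only [hwD _ p h, sub_self, Real.exp_zero, Complex.ofReal_one, one_mul]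
      exact h3.const_mul _
    · have h4 : Tendsto (fun k => Real.exp (w k ⬝ᵥ suppPt p - w k ⬝ᵥ suppPt p0)) U (nhds 0) := by
        refine Real.tendsto_exp_atBot.comp ?_
        refine (tendsto_neg_atTop_atBot.comp (hwnD p hp h)).congr fun k => ?_
        simp
      have h5 : Tendsto (fun k => ((Real.exp (w k ⬝ᵥ suppPt p - w k ⬝ᵥ suppPt p0) : ℝ) : ℂ)) U
          (nhds 0) := by
        exact (Complex.continuous_ofReal.tendsto' 0 0 Complex.ofReal_zero).comp h4
      simpa using (h5.mul h3).const_mul (b p)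
  have hbdd : ∀ (x : ℕ → ℂ) (C : ℝ), (∀ᶠ k in (U : Filter ℕ), ‖x k‖ ≤ C) →
      Tendsto (fun k => x k / (M k : ℂ)) U (nhds 0) := by
    intro x C hx
    refine squeeze_zero_norm' (a := fun k => C / M k) ?_ (tendsto_const_nhds.div_atTop hMtop)
    filter_upwards [hx] with k hk
    rw [norm_div, Complex.norm_real, Real.norm_eq_abs, abs_of_pos (hMpos k)]
    exact div_le_div_of_nonneg_right hk (hMpos k).le
  -- the truncation vanishes at the limit
  have hf0 : ∑ p ∈ D, c p * mono p a0 = 0 := by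
    have h1 := hbdd (fun k => eval c (z k)) B hev
    simp only [eval_eq] at h1
    exact tendsto_nhds_unique (hlead c) h1
  have hf1 : eval (trunc c Δ) a0 = 0 := by
    rw [eval_eq, hsupp, ← hf0]
    exact Finset.sum_congr rfl fun p hp => by rw [hval p hp]
  -- the limit of the multipliers
  obtain ⟨m0, hm0⟩ := ultra_lim U m 1 (Eventually.of_forall fun k => (hm k).le)
  have hnm0 : ‖m0‖ = 1 := by
    have h1 := hm0.norm
    simp only [hm] at h1
    exact (tendsto_nhds_unique h1 tendsto_const_nhds)
  let y : Fin n → ℂ := fun i =>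
    m0 * (starRingEnd ℂ) (∑ p ∈ D, c p * (p.1 i) * mono p a0) +
      (starRingEnd ℂ) m0 * ∑ p ∈ D, c p * (p.2 i) * mono p a0
  have hylim : ∀ i, Tendsto (fun k => ((l k / M k * ‖z k i‖ ^ 2 : ℝ) : ℂ)) U (nhds (y i)) := by
    intro i
    have h1 := hbdd _ 1 (Eventually.of_forall fun k => hmil k i)
    have hcj := Complex.continuous_conj
    have h2 := hlead (fun p => c p * (p.1 i))
    have h3 := hlead (fun p => c p * (p.2 i))
    have h4 := (hm0.mul ((hcj.tendsto _).comp h2)).add (((hcj.tendsto _).comp hm0).mul h3)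
    have h5 := h1.add h4
    rw [zero_add] at h5
    refine h5.congr fun k => ?_
    have : (M k : ℂ) ≠ 0 := by exact_mod_cast (hMpos k).ne'
    simp only [Function.comp, map_div₀, Complex.conj_ofReal, Complex.ofReal_mul,
      Complex.ofReal_div]
    field_simp
    ring
  have hyre : ∀ i, Tendsto (fun k => l k / M k * ‖z k i‖ ^ 2) U (nhds (y i).re) := by
    intro i
    have := (Complex.continuous_re.tendsto _).comp (hylim i)
    refine this.congr fun k => ?_
    simp only [Function.comp, Complex.ofReal_re]
  have hyim : ∀ i, (y i).im = 0 := by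
    intro i
    have := (Complex.continuous_im.tendsto _).comp (hylim i)
    refine tendsto_nhds_unique this ?_
    refine tendsto_const_nhds.congr fun k => ?_
    simp only [Function.comp, Complex.ofReal_im]
  -- pairing identity
  have hpair : ∀ t : Fin n → ℂ,
      ((starRingEnd ℂ) m0 * ∑ p ∈ D, c p * (mono p a0 *
        ∑ i, ((p.1 i) * t i + (p.2 i) * (starRingEnd ℂ) (t i)))).re
      = (∑ i, (starRingEnd ℂ) (t i) * y i).re := by
    intro t
    have h1 : ∑ p ∈ D, c p * (mono p a0 *
        ∑ i, ((p.1 i) * t i + (p.2 i) * (starRingEnd ℂ) (t i))) =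
        ∑ i, (t i * (∑ p ∈ D, c p * (p.1 i) * mono p a0) +
          (starRingEnd ℂ) (t i) * ∑ p ∈ D, c p * (p.2 i) * mono p a0) := by
      simp only [Finset.mul_sum, ← Finset.sum_add_distrib]
      rw [Finset.sum_comm]
      refine Finset.sum_congr rfl fun i _ => Finset.sum_congr rfl fun p _ => ?_
      ring
    rw [h1, Finset.mul_sum, Complex.re_sum, Complex.re_sum]
    refine Finset.sum_congr rfl fun i _ => ?_
    simp only [y]
    generalize (∑ p ∈ D, c p * (p.1 i) * mono p a0) = E
    generalize (∑ p ∈ D, c p * (p.2 i) * mono p a0) = F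
    simp only [Complex.mul_re, Complex.add_re, Complex.conj_re, Complex.conj_im, Complex.mul_im,
      Complex.add_im]
    ring
  -- non-degeneracy gives a nonzero component
  have hne : ∃ i, (y i).re ≠ 0 := by
    by_contra hcon
    push Not at hcon
    have hy0 : ∀ i, y i = 0 := fun i => Complex.ext (hcon i) (hyim i)
    have hsurj : Function.Surjective ⇑(fderiv ℝ (eval (trunc c Δ)) a0) := by
      have := hnd Δ hΔ a0 ha0ne hf1
      simpa [Sing] using this
    obtain ⟨v, hv⟩ := hsurj m0
    have hvt : v = fun i => a0 i * (v i / a0 i) := by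
      funext i
      have := ha0ne i
      field_simp
    have h1 := hpair (fun i => v i / a0 i)
    rw [hvt, fderiv_eval, hsupp] at hv
    have h2 : ∑ p ∈ D, c p * (mono p a0 *
        ∑ i, ((p.1 i) * (v i / a0 i) + (p.2 i) * (starRingEnd ℂ) (v i / a0 i))) = m0 := by
      rw [← hv]
      exact Finset.sum_congr rfl fun p hp => by rw [hval p hp]
    rw [h2] at h1
    simp only [hy0, mul_zero, Finset.sum_const_zero, Complex.zero_re] at h1
    rw [mul_comm, Complex.mul_conj, Complex.ofReal_re, Complex.normSq_eq_norm_sq, hnm0] at h1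
    norm_num at h1
  -- Euler relation
  have heuler : ∀ k, ∑ i, w k i * (y i).re = 0 := by
    intro k
    have h1 := hpair (fun i => ((w k i : ℝ) : ℂ))
    have h2 : ∑ p ∈ D, c p * (mono p a0 *
        ∑ i, ((p.1 i) * ((w k i : ℝ) : ℂ) + (p.2 i) * (starRingEnd ℂ) ((w k i : ℝ) : ℂ)))
        = 0 := by
      have h3 : ∀ p ∈ D, c p * (mono p a0 *
        ∑ i, ((p.1 i) * ((w k i : ℝ) : ℂ) + (p.2 i) * (starRingEnd ℂ) ((w k i : ℝ) : ℂ)))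
          = ((w k ⬝ᵥ suppPt p0 : ℝ) : ℂ) * (c p * mono p a0) := by
        intro p hp
        have h4 : ∑ i, ((p.1 i) * ((w k i : ℝ) : ℂ) + (p.2 i) * (starRingEnd ℂ) ((w k i : ℝ) : ℂ))
            = ((w k ⬝ᵥ suppPt p : ℝ) : ℂ) := by
          simp only [dotProduct, suppPt, Complex.conj_ofReal]
          push_cast
          exact Finset.sum_congr rfl fun i _ => by ring
        rw [h4, hwD k p hp]
        ring
      rw [Finset.sum_congr rfl h3, ← Finset.mul_sum, hf0, mul_zero]
    rw [h2, mul_zero, Complex.zero_re, Complex.re_sum] at h1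
    rw [h1]
    refine Finset.sum_congr rfl fun i _ => ?_
    simp
  -- sizes
  set r : ℕ → ℝ := fun k => l k / M k with hr
  have hr0 : Tendsto (fun k => |r k|) U (nhds 0) := by
    have h1 : Tendsto (fun k => ∑ i, |r k * ‖z k i‖ ^ 2|) U (nhds (∑ i, |(y i).re|)) :=
      tendsto_finsetSum _ fun i _ => (hyre i).abs
    have h2 : Tendsto (fun k => (∑ i, |r k * ‖z k i‖ ^ 2|) / ‖z k‖ ^ 2) U (nhds 0) :=
      h1.div_atTop ((tendsto_pow_atTop two_ne_zero).comp hinf)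
    refine squeeze_zero' (Eventually.of_forall fun k => abs_nonneg _) ?_ h2
    filter_upwards [hinf.eventually_ge_atTop 1] with k hk
    have hne : Nonempty (Fin n) := ⟨hne.choose⟩
    obtain ⟨i, hi⟩ := Finite.exists_max (fun i => ‖z k i‖)
    have hni : ‖z k‖ = ‖z k i‖ :=
      le_antisymm ((pi_norm_le_iff_of_nonneg (norm_nonneg _)).2 hi) (norm_le_pi_norm _ i)
    rw [le_div_iff₀ (by positivity)]
    have h3 := Finset.single_le_sum (f := fun i => |r k * ‖z k i‖ ^ 2|)
      (fun j _ => abs_nonneg _) (mem_univ i)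
    refine le_trans (le_of_eq ?_) h3
    simp only [hni, abs_mul, abs_pow, abs_norm]
  have hwpos : ∀ᶠ k in (U : Filter ℕ), ∀ i, (y i).re ≠ 0 → 0 < w k i := by
    rw [Filter.eventually_all]
    intro i
    by_cases hyi : (y i).re = 0
    · simp [hyi]
    have hab : 0 < |(y i).re| := abs_pos.2 hyi
    set C : ℝ := Real.exp (S τ i + 1) ^ 2 with hC
    have h1 : Tendsto (fun k => |r k| * C) U (nhds 0) := by simpa using hr0.mul_const C
    filter_upwards [h1.eventually_lt_const (show 0 < |(y i).re| / 2 by linarith),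
      (hyre i).abs.eventually_const_lt (show |(y i).re| / 2 < |(y i).re| by linarith),
      (hui i).eventually_lt_const (show S τ i < S τ i + 1 by linarith)] with k hk1 hk2 hk3 _
    rw [abs_mul, abs_pow, abs_norm] at hk2
    have h4 : C < ‖z k i‖ ^ 2 := by
      by_contra hcon
      push Not at hcon
      have := mul_le_mul_of_nonneg_left hcon (abs_nonneg (r k))
      linarith
    have h5 : Real.exp (S τ i + 1) < ‖z k i‖ := lt_of_pow_lt_pow_left₀ 2 (norm_nonneg _) h4
    have h6 : S τ i + 1 < Real.log ‖z k i‖ := (Real.lt_log_iff_exp_lt (hzpos k i)).2 h5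
    have h7 : w k i = Real.log ‖z k i‖ - u k i := rfl
    linarith
  obtain ⟨k, hk⟩ := hwpos.exists
  obtain ⟨i0, hi0⟩ := hne
  rcases U.em (fun k => 0 ≤ r k) with hs | hs
  · have hy0 : ∀ i, 0 ≤ (y i).re := fun i => ge_of_tendsto (hyre i) (by
      filter_upwards [hs] with k hk
      exact mul_nonneg hk (by positivity))
    have h1 : ∀ i ∈ univ, 0 ≤ w k i * (y i).re := by
      intro i _
      by_cases h : (y i).re = 0
      · simp [h]
      · exact mul_nonneg (hk i h).le (hy0 i)
    have h2 := (Finset.sum_eq_zero_iff_of_nonneg h1).1 (heuler k) i0 (mem_univ _)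
    exact (mul_ne_zero (hk i0 hi0).ne' hi0) h2
  · have hy0 : ∀ i, (y i).re ≤ 0 := fun i => le_of_tendsto (hyre i) (by
      filter_upwards [hs] with k hk
      exact mul_nonpos_of_nonpos_of_nonneg (not_le.1 hk).le (by positivity))
    have h1 : ∀ i ∈ univ, w k i * (y i).re ≤ 0 := by
      intro i _
      by_cases h : (y i).re = 0
      · simp [h]
      · exact mul_nonpos_of_nonneg_of_nonpos (hk i h).le (hy0 i)
    have h2 := (Finset.sum_eq_zero_iff_of_nonpos h1).1 (heuler k) i0 (mem_univ _)
    exact (mul_ne_zero (hk i0 hi0).ne' hi0) h2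

end Mixed

/-- Corollary 4.3: a convenient Newton non-degenerate mixed polynomial has
`S(f) = ∅`. -/
theorem Sset_empty_of_convenient {n : ℕ} (c : MixedCoeff n)
    (hconv : Convenient c) (hnd : Mixed.NewtonNonDeg c) :
    Mixed.Sset c = ∅ := by
  rw [Set.eq_empty_iff_forall_notMem]
  rintro v ⟨zk, hM, hinf, hlim⟩
  choose z l m hm hz hev hnorm hmil using fun k => Mixed.perturb c (zk k) (hM k)
  obtain ⟨U, hU⟩ := Ultrafilter.exists_le (atTop : Filter ℕ)
  refine Mixed.main_aux c hconv hnd U z l m hm hz (‖v‖ + 1 + 1) ?_ ?_ hmil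
  · filter_upwards [(hlim.norm.mono_left hU).eventually_lt_const
      (show ‖v‖ < ‖v‖ + 1 by linarith)] with k hk
    linarith [hev k]
  · exact tendsto_atTop_mono hnorm
      (tendsto_atTop_add_const_right _ (-1) (hinf.mono_left hU))
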